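/- For α ∈ (0,1], λ > 0, t ≥ 0, the coefficients p_k(t) = ((-1)^k / k!) ∑_{r=0}^∞ ((-λ^α t)^r / r!) · Γ(αr+1)/Γ(αr+1-k) satisfy ∑_{k=0}^∞ p_k(t) u^k = exp(-λ^α t (1-u)^α) for all u ∈ [0,1], where Γ(αr+1)/Γ(αr+1-k) is interpreted as the falling-factorial product αr(αr-1)⋯(αr-k+1). -/

import Mathlib

open Real Finset

lemma fac_choose (a : ℝ) (k : ℕ) :
    (k.factorial : ℝ) * Ring.choose a k = ∏ i ∈ range k, (a - i) := by
  rw [← descPochhammer_eval_eq_prod_range, Ring.choose_eq_smul, smul_eq_mul,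
    mul_inv_cancel_left₀ (by positivity), ← Polynomial.aeval_eq_smeval, Polynomial.aeval_def,
    ← Polynomial.eval_map, descPochhammer_map]

lemma choose_eq_prod (a : ℝ) (k : ℕ) :
    Ring.choose a k = (∏ i ∈ range k, (a - i)) / k.factorial := by
  rw [← fac_choose]; field_simp

lemma neg_choose_nonneg (a : ℝ) (ha : a ≤ 0) (k : ℕ) : 0 ≤ (-1 : ℝ) ^ k * Ring.choose a k := by
  have : (-1 : ℝ) ^ k * Ring.choose a k = (∏ i ∈ range k, ((i : ℝ) - a)) / k.factorial := by
    rw [choose_eq_prod, ← mul_div_assoc]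
    congr 1
    have h : (-1 : ℝ) ^ k = ∏ i ∈ range k, (-1 : ℝ) := by simp
    rw [h, ← prod_mul_distrib]
    exact prod_congr rfl fun i _ => by ring
  rw [this]
  refine div_nonneg (prod_nonneg fun i _ => ?_) (by positivity)
  have : (0 : ℝ) ≤ i := by positivity
  linarith

lemma choose_succ_mul (a : ℝ) (k : ℕ) :
    Ring.choose a (k + 1) = a / (k + 1) * Ring.choose (a - 1) k := by
  rw [choose_eq_prod, choose_eq_prod, prod_range_succ', Nat.factorial_succ]
  have : ∏ i ∈ range k, (a - ((i + 1 : ℕ) : ℝ)) = ∏ i ∈ range k, (a - 1 - i) :=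
    prod_congr rfl fun i _ => by push_cast; ring
  rw [this]
  push_cast
  field_simp
  simp [mul_comm]

lemma sum_abs (a : ℝ) (h0 : 0 ≤ a) (h1 : a ≤ 1) (n : ℕ) :
    ∑ k ∈ range (n + 1), ‖(-1 : ℝ) ^ k * Ring.choose a k‖
      = 2 - (-1 : ℝ) ^ n * Ring.choose (a - 1) n := by
  induction n with
  | zero => simp; norm_num
  | succ n ih =>
    rw [sum_range_succ, ih]
    have hs : ‖(-1 : ℝ) ^ (n + 1) * Ring.choose a (n + 1)‖
        = -((-1 : ℝ) ^ (n + 1) * Ring.choose a (n + 1)) := by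
      rw [Real.norm_eq_abs]
      apply abs_of_nonpos
      rw [choose_succ_mul]
      have h2 := neg_choose_nonneg (a - 1) (by linarith) n
      have h3 : 0 ≤ a / ((n : ℝ) + 1) := by positivity
      have := mul_nonneg h3 h2
      rw [pow_succ]
      linarith
    have h4 := Ring.choose_succ_succ (a - 1) n
    rw [sub_add_cancel] at h4
    rw [hs, h4, pow_succ]
    ring

lemma summable_base (a : ℝ) (h0 : 0 ≤ a) (h1 : a ≤ 1) :
    Summable fun k : ℕ => ‖(-1 : ℝ) ^ k * Ring.choose a k‖ := by
  refine summable_of_sum_range_le (c := 2) (fun _ => norm_nonneg _) fun n => ?_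
  refine (sum_le_sum_of_subset_of_nonneg (range_mono (Nat.le_succ n))
    fun _ _ _ => norm_nonneg _).trans ?_
  rw [sum_abs a h0 h1]
  have h2 := neg_choose_nonneg (a - 1) (by linarith) n
  linarith

lemma term_le (a u : ℝ) (hu0 : 0 ≤ u) (hu1 : u ≤ 1) (k : ℕ) :
    ‖(-1 : ℝ) ^ k * Ring.choose a k * u ^ k‖ ≤ ‖(-1 : ℝ) ^ k * Ring.choose a k‖ := by
  rw [norm_mul]
  refine mul_le_of_le_one_right (norm_nonneg _) ?_
  rw [norm_pow, Real.norm_of_nonneg hu0]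
  exact pow_le_one₀ hu0 hu1

lemma tsum_lt (a u : ℝ) (hu0 : 0 ≤ u) (hu1 : u < 1) :
    ∑' k : ℕ, (-1 : ℝ) ^ k * Ring.choose a k * u ^ k = (1 - u) ^ a := by
  have h := (Real.one_add_rpow_hasFPowerSeriesOnBall_zero (a := a)).hasSum (y := -u) (by
    rw [mem_eball_zero_iff, enorm_neg, ← ofReal_norm, Real.norm_of_nonneg hu0]
    simpa using hu1)
  have h2 := h.tsum_eq
  rw [show 1 + (0 + -u) = 1 - u by ring] at h2
  rw [← h2]
  refine tsum_congr fun k => ?_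
  rw [binomialSeries_apply]
  simp only [List.ofFn_const, List.prod_replicate, smul_eq_mul]
  rw [neg_pow u]
  ring

lemma tsum_base (a u : ℝ) (h0 : 0 < a) (h1 : a ≤ 1) (hu0 : 0 ≤ u) (hu1 : u ≤ 1) :
    ∑' k : ℕ, (-1 : ℝ) ^ k * Ring.choose a k * u ^ k = (1 - u) ^ a := by
  have hc : ContinuousOn (fun u : ℝ => ∑' k : ℕ, (-1 : ℝ) ^ k * Ring.choose a k * u ^ k)
      (Set.Icc 0 1) :=
    continuousOn_tsum (fun k => by fun_prop) (summable_base a h0.le h1)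
      (fun k x hx => term_le a x hx.1 hx.2 k)
  have hd : ContinuousOn (fun u : ℝ => (1 - u) ^ a) (Set.Icc 0 1) :=
    ContinuousOn.rpow_const (by fun_prop) fun _ _ => Or.inr h0.le
  have he : Set.EqOn (fun u : ℝ => ∑' k : ℕ, (-1 : ℝ) ^ k * Ring.choose a k * u ^ k)
      (fun u : ℝ => (1 - u) ^ a) (Set.Ico 0 1) := fun x hx => tsum_lt a x hx.1 hx.2
  exact he.of_subset_closure hc hd Set.Ico_subset_Icc_self
    (by rw [closure_Ico (by norm_num)]) ⟨hu0, hu1⟩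

lemma conv (a b u : ℝ) (k : ℕ) :
    (-1 : ℝ) ^ k * Ring.choose (a + b) k * u ^ k =
      ∑ kl ∈ antidiagonal k, ((-1 : ℝ) ^ kl.1 * Ring.choose a kl.1 * u ^ kl.1) *
        ((-1 : ℝ) ^ kl.2 * Ring.choose b kl.2 * u ^ kl.2) := by
  rw [Ring.add_choose_eq k (Commute.all a b), mul_sum, sum_mul]
  refine sum_congr rfl fun x hx => ?_
  rw [← mem_antidiagonal.mp hx, pow_add, pow_add]
  ring

lemma power (a u : ℝ) (h0 : 0 < a) (h1 : a ≤ 1) (hu0 : 0 ≤ u) (hu1 : u ≤ 1) (C : ℝ)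
    (hC : C = ∑' k : ℕ, ‖(-1 : ℝ) ^ k * Ring.choose a k * u ^ k‖) (r : ℕ) :
    Summable (fun k : ℕ => ‖(-1 : ℝ) ^ k * Ring.choose (a * r) k * u ^ k‖) ∧
    ∑' k : ℕ, ‖(-1 : ℝ) ^ k * Ring.choose (a * r) k * u ^ k‖ ≤ C ^ r ∧
    ∑' k : ℕ, (-1 : ℝ) ^ k * Ring.choose (a * r) k * u ^ k = ((1 - u) ^ a) ^ r := by
  have hb : Summable fun k : ℕ => ‖(-1 : ℝ) ^ k * Ring.choose a k * u ^ k‖ :=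
    (summable_base a h0.le h1).of_nonneg_of_le (fun _ => norm_nonneg _) (term_le a u hu0 hu1)
  have hC0 : 0 ≤ C := hC ▸ tsum_nonneg fun _ => norm_nonneg _
  induction r with
  | zero =>
    have hz : ∀ k : ℕ, k ≠ 0 → Ring.choose (0 : ℝ) k = 0 := fun k hk =>
      Ring.choose_zero_pos ℝ (Nat.pos_of_ne_zero hk)
    simp only [Nat.cast_zero, mul_zero, pow_zero]
    refine ⟨summable_of_ne_finset_zero (s := {0}) fun k hk => ?_, ?_, ?_⟩
    · rw [hz k (by simpa using hk)]; simp
    · rw [tsum_eq_single 0 fun k hk => by rw [hz k hk]; simp]; simp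
    · rw [tsum_eq_single 0 fun k hk => by rw [hz k hk]; simp]; simp
  | succ r ih =>
    obtain ⟨i1, i2, i3⟩ := ih
    have e : a * ((r + 1 : ℕ) : ℝ) = a * r + a := by push_cast; ring
    simp only [e, conv (a * r) a u]
    have hs := summable_norm_sum_mul_antidiagonal_of_summable_norm i1 hb
    refine ⟨hs, ?_, ?_⟩
    · have i1' : Summable fun k : ℕ => ‖‖(-1 : ℝ) ^ k * Ring.choose (a * r) k * u ^ k‖‖ := by
        simpa only [norm_norm] using i1
      have hb' : Summable fun k : ℕ => ‖‖(-1 : ℝ) ^ k * Ring.choose a k * u ^ k‖‖ := by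
        simpa only [norm_norm] using hb
      have hp := tsum_mul_tsum_eq_tsum_sum_antidiagonal_of_summable_norm i1' hb'
      have hps := (summable_norm_sum_mul_antidiagonal_of_summable_norm i1' hb').of_norm
      calc _ ≤ _ := hs.tsum_le_tsum (fun k => (norm_sum_le _ _).trans
              (le_of_eq (sum_congr rfl fun x _ => norm_mul _ _))) hps
        _ = _ := hp.symm
        _ ≤ C ^ r * C := by
            rw [← hC]
            exact mul_le_mul_of_nonneg_right i2 hC0
        _ = C ^ (r + 1) := (pow_succ _ _).symm
    · rw [← tsum_mul_tsum_eq_tsum_sum_antidiagonal_of_summable_norm i1 hb, i3,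
        tsum_base a u h0 h1 hu0 hu1, pow_succ]

/-- State probabilities of the space-fractional Poisson process: with
`p k t = ((-1)^k/k!) ∑_r ((-λ^α t)^r/r!) · αr(αr-1)⋯(αr-k+1)`, one has
`∑_k p k t · u^k = exp(-λ^α t (1-u)^α)` for `u ∈ [0,1]`. -/
theorem stmt6 (α lam t : ℝ) (hα : 0 < α ∧ α ≤ 1) (hlam : 0 < lam) (ht : 0 ≤ t)
    (p : ℕ → ℝ)
    (hp : ∀ k : ℕ, p k = ((-1 : ℝ) ^ k / k.factorial) *
      ∑' r : ℕ, ((-(lam ^ α * t)) ^ r / r.factorial) *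
        ∏ i ∈ Finset.range k, (α * r - i)) :
    ∀ u : ℝ, 0 ≤ u → u ≤ 1 →
      ∑' k : ℕ, p k * u ^ k = Real.exp (-(lam ^ α) * t * (1 - u) ^ α) := by
  intro u hu0 hu1
  obtain ⟨h0, h1⟩ := hα
  set c : ℝ := -(lam ^ α * t) with hc
  set C : ℝ := ∑' k : ℕ, ‖(-1 : ℝ) ^ k * Ring.choose α k * u ^ k‖ with hC
  have hP := power α u h0 h1 hu0 hu1 C hC
  let F : ℕ → ℕ → ℝ := fun r k =>
    c ^ r / r.factorial * ((-1 : ℝ) ^ k * Ring.choose (α * r) k * u ^ k)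
  have hF : Summable (Function.uncurry F) := by
    refine Summable.of_norm ((summable_prod_of_nonneg fun _ => norm_nonneg _).2 ⟨fun r => ?_, ?_⟩)
    · simp only [Function.uncurry, F, norm_mul (c ^ r / _)]
      exact (hP r).1.mul_left _
    · simp only [Function.uncurry, F]
      refine Summable.of_nonneg_of_le (fun _ => tsum_nonneg fun _ => norm_nonneg _) (fun r => ?_)
        (Real.summable_pow_div_factorial (|c| * C))
      simp only [norm_mul (c ^ r / _)]
      rw [tsum_mul_left]
      refine (mul_le_mul_of_nonneg_left (hP r).2.1 (norm_nonneg _)).trans (le_of_eq ?_)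
      rw [norm_div, norm_pow, Real.norm_eq_abs, Real.norm_natCast, mul_pow]
      ring
  have e1 : ∀ k, p k * u ^ k = ∑' r, F r k := by
    intro k
    rw [hp k, ← tsum_mul_left, ← tsum_mul_right]
    refine tsum_congr fun r => ?_
    simp only [F, choose_eq_prod]
    ring
  rw [tsum_congr e1, hF.tsum_comm]
  have e2 : ∀ r, ∑' k, F r k = (c * (1 - u) ^ α) ^ r / r.factorial := by
    intro r
    simp only [F]
    rw [tsum_mul_left, (hP r).2.2, mul_pow]
    ring
  rw [tsum_congr e2, Real.exp_eq_exp_ℝ, NormedSpace.exp_eq_tsum_div]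
  simp only [hc, neg_mul]
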